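/- There are exactly 38 pairs (P, Q) of positive integers such that P and Q are coprime, both P and Q are regular, 1 ≤ Q < 60, and Q < P < (29/12)·Q. -/

import Mathlib

/-- A positive integer is regular if it has no prime factors other than 2, 3 and 5. -/
def BabylonianRegular (n : ℕ) : Prop := ∀ p : ℕ, p.Prime → p ∣ n → p = 2 ∨ p = 3 ∨ p = 5

theorem reg_dvd (k : ℕ) : ∀ n : ℕ, 0 < n → n < 2 ^ (k + 1) → BabylonianRegular n → n ∣ 30 ^ k := by
  induction k with
  | zero =>
    intro n h0 h1 _
    have : n = 1 := by omega
    simp [this]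
  | succ k ih =>
    intro n h0 h1 hr
    by_cases hn : n = 1
    · simp [hn]
    have hp := Nat.minFac_prime hn
    obtain ⟨m, hm⟩ := Nat.minFac_dvd n
    have hd : n.minFac ∣ 30 := by
      rcases hr _ hp (Nat.minFac_dvd n) with h | h | h <;> rw [h] <;> norm_num
    have h2 := hp.two_le
    have hm0 : 0 < m := by
      rcases Nat.eq_zero_or_pos m with h | h
      · subst h; omega
      · exact h
    have hlt : m < 2 ^ (k + 1) := by
      have : 2 * m ≤ n := by
        calc 2 * m ≤ n.minFac * m := Nat.mul_le_mul_right _ h2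
          _ = n := hm.symm
      rw [pow_succ] at h1
      omega
    have hmr : BabylonianRegular m := fun p hp' hpm =>
      hr p hp' (hm ▸ Dvd.dvd.mul_left hpm _)
    rw [hm, pow_succ, mul_comm]
    exact mul_dvd_mul (ih m hm0 hlt hmr) hd

theorem reg_of_dvd (k n : ℕ) (h : n ∣ 30 ^ k) : BabylonianRegular n := by
  intro p hp hpn
  have h1 : p ∣ 2 * 3 * 5 := hp.dvd_of_dvd_pow (hpn.trans h)
  rcases (Nat.Prime.dvd_mul hp).1 h1 with h2 | h2
  · rcases (Nat.Prime.dvd_mul hp).1 h2 with h3 | h3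
    · exact Or.inl ((Nat.prime_dvd_prime_iff_eq hp Nat.prime_two).1 h3)
    · exact Or.inr (Or.inl ((Nat.prime_dvd_prime_iff_eq hp Nat.prime_three).1 h3))
  · exact Or.inr (Or.inr ((Nat.prime_dvd_prime_iff_eq hp Nat.prime_five).1 h2))

theorem friberg_38_pairs :
    {pq : ℕ × ℕ | 0 < pq.1 ∧ 0 < pq.2 ∧ Nat.Coprime pq.1 pq.2 ∧
        BabylonianRegular pq.1 ∧ BabylonianRegular pq.2 ∧ 1 ≤ pq.2 ∧ pq.2 < 60 ∧
        pq.2 < pq.1 ∧ (pq.1 : ℚ) < (29/12) * (pq.2 : ℚ)}.ncard = 38 := by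
  have key : {pq : ℕ × ℕ | 0 < pq.1 ∧ 0 < pq.2 ∧ Nat.Coprime pq.1 pq.2 ∧
        BabylonianRegular pq.1 ∧ BabylonianRegular pq.2 ∧ 1 ≤ pq.2 ∧ pq.2 < 60 ∧
        pq.2 < pq.1 ∧ (pq.1 : ℚ) < (29/12) * (pq.2 : ℚ)} =
      ((((Finset.range 145).filter (fun n => n ∣ 30 ^ 7) ×ˢ
        (Finset.range 60).filter (fun n => n ∣ 30 ^ 7)).filter
        (fun pq => pq.2 < pq.1 ∧ 12 * pq.1 < 29 * pq.2 ∧ Nat.Coprime pq.1 pq.2) :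
          Finset (ℕ × ℕ)) : Set (ℕ × ℕ)) := by
    ext ⟨p, q⟩
    have hq : (p : ℚ) < (29/12) * (q : ℚ) ↔ 12 * p < 29 * q := by
      rw [← Nat.cast_lt (α := ℚ)]
      push_cast
      constructor <;> intro h <;> linarith
    simp only [Set.mem_ofPred_eq, Finset.coe_filter, Finset.mem_product, Finset.mem_filter,
      Finset.mem_range, hq]
    constructor
    · rintro ⟨h1, h2, h3, h4, h5, -, h6, h7, h8⟩
      exact ⟨⟨⟨by omega, reg_dvd 7 p h1 (by norm_num; omega) h4⟩,
        ⟨h6, reg_dvd 7 q h2 (by norm_num; omega) h5⟩⟩, h7, h8, h3⟩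
    · rintro ⟨⟨⟨_, h4⟩, ⟨h6, h5⟩⟩, h7, h8, h3⟩
      exact ⟨by omega, by omega, h3, reg_of_dvd 7 p h4, reg_of_dvd 7 q h5, by omega, h6, h7, h8⟩
  rw [key, Set.ncard_coe_finset]
  decide +kernel
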